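/- In the online Ramsey game with targets red C₄ and blue P₆, consider the position in which the five edges v₁v₂, v₂v₃, v₃v₄, v₄v₅, v₅v₆ of a path on six distinct vertices have been colored red, red, red, blue, red respectively (case R2). From this position Builder can force a red copy of C₄ or a blue copy of P₆ within at most 6 additional rounds, so within at most 11 rounds in total. -/

import Mathlib

open SimpleGraph

/-- The set `S` of edges of the infinite complete graph on `ℕ` contains a copy of
the graph `G`: there is an injective map of the vertices of `G` into `ℕ` sending
every edge of `G` into `S`. -/
def HasCopy {V : Type*} (G : SimpleGraph V) (S : Set (Sym2 ℕ)) : Prop :=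
  ∃ f : V → ℕ, Function.Injective f ∧ ∀ a b, G.Adj a b → s(f a, f b) ∈ S

/-- `BuilderWinsIn G H R B r` means: in the online Ramsey game with targets a red copy
of `G` and a blue copy of `H`, from the position in which the edges in `R` have been
colored red and the edges in `B` have been colored blue, Builder has a strategy that
guarantees, against every Painter strategy, that within at most `r` further rounds the
colored edges contain a red copy of `G` or a blue copy of `H`.  (In each round Builder
chooses a previously unchosen non-loop edge of the infinite complete graph on `ℕ`, and
Painter immediately colors it red or blue; so Builder wins within `r + 1` rounds iff he
has already won, or he can choose an edge such that whichever color Painter gives it,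
he can win within `r` further rounds.) -/
def BuilderWinsIn {V W : Type*} (G : SimpleGraph V) (H : SimpleGraph W) :
    Set (Sym2 ℕ) → Set (Sym2 ℕ) → ℕ → Prop
  | R, B, 0 => HasCopy G R ∨ HasCopy H B
  | R, B, (r + 1) => HasCopy G R ∨ HasCopy H B ∨
      ∃ e : Sym2 ℕ, ¬ e.IsDiag ∧ e ∉ R ∧ e ∉ B ∧
        BuilderWinsIn G H (insert e R) B r ∧ BuilderWinsIn G H R (insert e B) r

/-- The online size Ramsey number `ř(G, H)`: the least `t` such that, starting from the
empty position, Builder can force a red copy of `G` or a blue copy of `H` within at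
most `t` rounds. -/
noncomputable def onlineRamsey {V W : Type*} (G : SimpleGraph V) (H : SimpleGraph W) : ℕ :=
  sInf {t | BuilderWinsIn G H ∅ ∅ t}


/-- A Builder strategy tree on the seven vertices `Fin 7`: either a move together with the
continuations for a red and a blue answer, or a witness of a red `C₄` or a blue `P₆`. -/
inductive StratTree
  | red (a b c d : Fin 7)
  | blue (a b c d e f : Fin 7)
  | move (a b : Fin 7) (onRed onBlue : StratTree)

/-- Verification of a strategy tree from a position given by lists of edges. -/
def StratTree.check : StratTree → List (Sym2 (Fin 7)) → List (Sym2 (Fin 7)) → ℕ → Bool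
  | .red a b c d, R, _, _ =>
      decide ([a, b, c, d].Nodup ∧ s(a, b) ∈ R ∧ s(b, c) ∈ R ∧ s(c, d) ∈ R ∧ s(a, d) ∈ R)
  | .blue a b c d e f, _, B, _ =>
      decide ([a, b, c, d, e, f].Nodup ∧ s(a, b) ∈ B ∧ s(b, c) ∈ B ∧ s(c, d) ∈ B ∧
        s(d, e) ∈ B ∧ s(e, f) ∈ B)
  | .move _ _ _ _, _, _, 0 => false
  | .move a b l r, R, B, n + 1 =>
      decide (a ≠ b ∧ s(a, b) ∉ R ∧ s(a, b) ∉ B) &&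
        (l.check (s(a, b) :: R) B n && r.check R (s(a, b) :: B) n)

/-- The edges of `ℕ` that are images of the listed edges under `w`. -/
def edgeImage (w : Fin 7 → ℕ) (L : List (Sym2 (Fin 7))) : Set (Sym2 ℕ) :=
  {e | ∃ x ∈ L, x.map w = e}

theorem edgeImage_cons (w : Fin 7 → ℕ) (x : Sym2 (Fin 7)) (L : List (Sym2 (Fin 7))) :
    edgeImage w (x :: L) = insert (x.map w) (edgeImage w L) := by
  ext e
  simp [edgeImage, eq_comm]

theorem mem_edgeImage {w : Fin 7 → ℕ} {L : List (Sym2 (Fin 7))} {a b : Fin 7}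
    (h : s(a, b) ∈ L) : s(w a, w b) ∈ edgeImage w L := ⟨_, h, rfl⟩

theorem not_mem_edgeImage {w : Fin 7 → ℕ} (hw : Function.Injective w)
    {L : List (Sym2 (Fin 7))} {x : Sym2 (Fin 7)} (h : x ∉ L) : x.map w ∉ edgeImage w L := by
  rintro ⟨y, hy, e⟩
  exact h (Sym2.map.injective hw e ▸ hy)

theorem builderWins_of_copy {V W : Type*} {G : SimpleGraph V} {H : SimpleGraph W}
    {R B : Set (Sym2 ℕ)} (h : HasCopy G R ∨ HasCopy H B) (n : ℕ) :
    BuilderWinsIn G H R B n := by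
  cases n with
  | zero => exact h
  | succ n =>
    rcases h with h | h
    · exact Or.inl h
    · exact Or.inr (Or.inl h)

theorem StratTree.check_sound {w : Fin 7 → ℕ} (hw : Function.Injective w) (t : StratTree) :
    ∀ (R B : List (Sym2 (Fin 7))) (n : ℕ), t.check R B n = true →
      BuilderWinsIn (cycleGraph 4) (pathGraph 6) (edgeImage w R) (edgeImage w B) n := by
  induction t with
  | red a b c d =>
    intro R B n h
    simp only [StratTree.check, decide_eq_true_eq] at h
    obtain ⟨hn, h1, h2, h3, h4⟩ := h
    refine builderWins_of_copy (Or.inl ⟨w ∘ [a, b, c, d].get,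
      hw.comp (List.nodup_iff_injective_get.1 hn), ?_⟩) n
    intro i j hij
    apply mem_edgeImage
    have h1' := Sym2.eq_swap ▸ h1
    have h2' := Sym2.eq_swap ▸ h2
    have h3' := Sym2.eq_swap ▸ h3
    have h4' := Sym2.eq_swap ▸ h4
    change Fin 4 at i j
    have hc : ∀ i j : Fin 4, (cycleGraph 4).Adj i j →
        (i.val + 1) % 4 = j.val ∨ (j.val + 1) % 4 = i.val := by decide
    replace hij := hc i j hij
    fin_cases i <;> fin_cases j <;>
      first
      | assumption
      | exact absurd hij (by decide)
  | blue a b c d e f =>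
    intro R B n h
    simp only [StratTree.check, decide_eq_true_eq] at h
    obtain ⟨hn, h1, h2, h3, h4, h5⟩ := h
    refine builderWins_of_copy (Or.inr ⟨w ∘ [a, b, c, d, e, f].get,
      hw.comp (List.nodup_iff_injective_get.1 hn), ?_⟩) n
    intro i j hij
    apply mem_edgeImage
    have h1' := Sym2.eq_swap ▸ h1
    have h2' := Sym2.eq_swap ▸ h2
    have h3' := Sym2.eq_swap ▸ h3
    have h4' := Sym2.eq_swap ▸ h4
    have h5' := Sym2.eq_swap ▸ h5
    change Fin 6 at i j
    rw [pathGraph_adj] at hij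
    fin_cases i <;> fin_cases j <;>
      first
      | assumption
      | exact absurd hij (by decide)
  | move a b l r ihl ihr =>
    intro R B n h
    cases n with
    | zero => simp [StratTree.check] at h
    | succ n =>
      simp only [StratTree.check, Bool.and_eq_true, decide_eq_true_eq] at h
      obtain ⟨⟨hab, hR, hB⟩, hl, hr⟩ := h
      refine Or.inr (Or.inr ⟨s(w a, w b), ?_, not_mem_edgeImage hw hR,
        not_mem_edgeImage hw hB, ?_, ?_⟩)
      · simpa using hw.ne hab
      · have := ihl _ _ _ hl
        rwa [edgeImage_cons] at this
      · have := ihr _ _ _ hr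
        rwa [edgeImage_cons] at this

/-- Builder's strategy; vertex `6` is one fresh vertex. -/
def stratR2 : StratTree :=
    (.move 0 2 (.move 0 4 (.move 0 3 (.red 0 1 2 3) (.move 1 4 (.red 1 2 0 4) (.move 1 5 
    (.red 1 0 4 5) (.move 2 5 (.red 2 0 4 5) (.blue 2 5 1 4 3 0))))) (.move 1 3 (.red 1 0 2 
    3) (.move 1 6 (.move 0 6 (.red 0 2 1 6) (.move 2 6 (.red 2 0 1 6) (.blue 2 6 0 4 3 1))) 
    (.move 2 4 (.move 0 5 (.red 0 2 4 5) (.blue 6 1 3 4 0 5)) (.move 0 3 (.red 0 1 2 3) 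
    (.blue 2 4 0 3 1 6)))))) (.move 0 3 (.red 0 1 2 3) (.move 1 4 (.move 2 5 (.red 2 1 4 5) 
    (.move 2 6 (.move 4 6 (.red 4 1 2 6) (.blue 5 2 0 3 4 6)) (.move 0 5 (.red 0 1 4 5) 
    (.blue 4 3 0 5 2 6)))) (.move 2 4 (.move 1 3 (.move 1 5 (.red 1 2 4 5) (.blue 2 0 3 4 1 
    5)) (.move 1 5 (.red 1 2 4 5) (.blue 2 0 3 4 1 5))) (.move 1 5 (.move 3 5 (.red 3 2 1 5) 
    (.blue 1 4 2 0 3 5)) (.blue 3 0 2 4 1 5))))))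

theorem stratR2_check :
    stratR2.check [s(0, 1), s(1, 2), s(2, 3), s(4, 5)] [s(3, 4)] 6 = true := by
  decide +kernel

theorem exists_fresh_extension (v : Fin 6 → ℕ) (hv : Function.Injective v) :
    ∃ w : Fin 7 → ℕ, Function.Injective w ∧ ∀ i : Fin 6, w i.castSucc = v i := by
  obtain ⟨x, hx⟩ := Infinite.exists_notMem_finset (Finset.univ.image v)
  refine ⟨Fin.snoc (α := fun _ => ℕ) v x, ?_, fun i => by simp⟩
  rw [Fin.snoc_injective_iff]
  refine ⟨hv, ?_⟩
  rintro ⟨i, rfl⟩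
  simp at hx

/-- Case `R2`: in the online Ramsey game with targets red `C₄` and blue `P₆`,
from the position in which the five edges `v₁v₂, v₂v₃, v₃v₄, v₄v₅, v₅v₆` of a path on
six distinct vertices have been colored red, red, red, blue, red respectively,
Builder can force a red copy of `C₄` or a blue copy of `P₆` within at most 6 additional
rounds (so within at most 11 rounds in total). -/
theorem builder_wins_case_R2 (v : Fin 6 → ℕ) (hv : Function.Injective v) :
    BuilderWinsIn (cycleGraph 4) (pathGraph 6)
      {s(v 0, v 1), s(v 1, v 2), s(v 2, v 3), s(v 4, v 5)}
      {s(v 3, v 4)} 6 := by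
  obtain ⟨w, hw, hwv⟩ := exists_fresh_extension v hv
  have h := stratR2.check_sound hw _ _ _ stratR2_check
  simp only [edgeImage_cons, Sym2.map_mk] at h
  have h0 : edgeImage w [] = ∅ := by ext; simp [edgeImage]
  rw [h0] at h
  simp only [← hwv]
  simpa using h
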